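/- arXiv:1106.5598 — 2 statements merged into one kernel-verified Lean document; each statement's English description precedes it below -/
import Mathlib

section
/- Let n ≥ 2 and m ≥ 4 be integers and fix x ∈ (0,1). The function h(y) = m·((1−x)^{n−1} y^{m−1}(1−y) + x^{n−1} y (1−y)^{m−1}) + (1−x)^{n−1} y^m + x^{n−1} (1−y)^m on [0,1] has derivative h'(y) = m(m−1)·((1−x)^{n−1} y^{m−2}(1−y) − x^{n−1} y (1−y)^{m−2}), and h attains its minimum at a unique point y* ∈ (0,1), namely the unique y ∈ (0,1) satisfying (y/(1−y))^{m−3} = (x/(1−x))^{n−1}, i.e. y* = u/(1+u) with u = (x/(1−x))^{(n−1)/(m−3)}. -/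
/-!
With `T m y = P(Bin(m, y) ≥ m - 1)`, the function `h` is `a * T m y + b * T m (1 - y)` for the
weights `a = (1 - x) ^ (n - 1)` and `b = x ^ (n - 1)`. As `T' = m (m - 1) y ^ (m - 2) (1 - y)`,
`h' = m (m - 1) y (1 - y) (a y ^ (m - 3) - b (1 - y) ^ (m - 3))`. The last factor is strictly
increasing on `[0, 1]`, so `h` decreases up to the root of that factor and increases after it. The
root is found by passing to the odds `y / (1 - y)`.
-/

open Set

/-- The probability that a binomial variable with parameters `m` and `y` is at least `m - 1`. -/
def binomialTail (m : ℕ) (y : ℝ) : ℝ :=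
  m * (y ^ (m - 1) * (1 - y)) + y ^ m

/-- The objective `h` of the minimization, with arbitrary weights in place of `(1 - x) ^ (n - 1)`
and `x ^ (n - 1)`: the probability of at least `m - 1` successes, weighted by `a`, plus the
probability of at least `m - 1` failures, weighted by `b`. -/
def weightedTails (a b : ℝ) (m : ℕ) (y : ℝ) : ℝ :=
  a * binomialTail m y + b * binomialTail m (1 - y)

theorem hasDerivAt_binomialTail (m : ℕ) (y : ℝ) :
    HasDerivAt (binomialTail m) (m * (m - 1) * (y ^ (m - 2) * (1 - y))) y := by
  have hsub : HasDerivAt (fun z : ℝ => 1 - z) (-1) y := (hasDerivAt_id y).const_sub 1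
  refine ((((hasDerivAt_pow (m - 1) y).mul hsub).const_mul (m : ℝ)).add
    (hasDerivAt_pow m y)).congr_deriv ?_
  have hcast : (m : ℝ) * (m - 1 : ℕ) = m * (m - 1) := by
    cases m <;> simp
  rw [← hcast, Nat.sub_sub]
  ring

theorem hasDerivAt_weightedTails (a b : ℝ) (m : ℕ) (y : ℝ) :
    HasDerivAt (weightedTails a b m)
      (m * (m - 1) * (a * y ^ (m - 2) * (1 - y) - b * y * (1 - y) ^ (m - 2))) y := by
  have hsub : HasDerivAt (fun z : ℝ => 1 - z) (-1) y := (hasDerivAt_id y).const_sub 1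
  refine (((hasDerivAt_binomialTail m y).const_mul a).add
    (((hasDerivAt_binomialTail m (1 - y)).comp y hsub).const_mul b)).congr_deriv ?_
  ring

theorem deriv_weightedTails_eq_mul (a b : ℝ) {m : ℕ} (hm : 3 ≤ m) (y : ℝ) :
    deriv (weightedTails a b m) y =
      m * (m - 1) * (y * (1 - y)) * (a * y ^ (m - 3) - b * (1 - y) ^ (m - 3)) := by
  obtain ⟨k, rfl⟩ := Nat.exists_eq_add_of_le' hm
  rw [(hasDerivAt_weightedTails a b (k + 3) y).deriv, Nat.add_sub_cancel,
    show k + 3 - 2 = k + 1 by rfl]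
  ring

theorem strictMonoOn_mul_pow_sub_mul_one_sub_pow {a b : ℝ} (ha : 0 < a) (hb : 0 ≤ b) {k : ℕ}
    (hk : k ≠ 0) : StrictMonoOn (fun y : ℝ => a * y ^ k - b * (1 - y) ^ k) (Icc 0 1) := by
  intro y hy z hz hyz
  have hpow : y ^ k < z ^ k := pow_lt_pow_left₀ hyz hy.1 hk
  have hpow_one_sub : (1 - z) ^ k ≤ (1 - y) ^ k :=
    pow_le_pow_left₀ (sub_nonneg.2 hz.2) (sub_le_sub_left hyz.le 1) k
  have hleft := mul_lt_mul_of_pos_left hpow ha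
  have hright := mul_le_mul_of_nonneg_left hpow_one_sub hb
  beta_reduce
  linarith

theorem lt_of_deriv_neg_of_deriv_pos {f : ℝ → ℝ} {l r s y : ℝ} (hs : s ∈ Icc l r)
    (hf : ContinuousOn f (Icc l r)) (hneg : ∀ z ∈ Ioo l s, deriv f z < 0)
    (hpos : ∀ z ∈ Ioo s r, 0 < deriv f z) (hy : y ∈ Icc l r) (hne : y ≠ s) : f s < f y := by
  rcases lt_or_gt_of_ne hne with hlt | hgt
  · have hanti : StrictAntiOn f (Icc l s) :=
      strictAntiOn_of_deriv_neg (convex_Icc l s) (hf.mono (Icc_subset_Icc_right hs.2))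
        (by simpa only [interior_Icc] using hneg)
    exact hanti ⟨hy.1, hlt.le⟩ (right_mem_Icc.2 hs.1) hlt
  · have hmono : StrictMonoOn f (Icc s r) :=
      strictMonoOn_of_deriv_pos (convex_Icc s r) (hf.mono (Icc_subset_Icc_left hs.1))
        (by simpa only [interior_Icc] using hpos)
    exact hmono (left_mem_Icc.2 hs.2) ⟨hgt.le, hy.2⟩ hgt

theorem weightedTails_lt_of_critical {a b s y : ℝ} {m : ℕ} (ha : 0 < a) (hb : 0 ≤ b) (hm : 4 ≤ m)
    (hs : s ∈ Icc 0 1) (hcrit : a * s ^ (m - 3) = b * (1 - s) ^ (m - 3)) (hy : y ∈ Icc 0 1)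
    (hne : y ≠ s) : weightedTails a b m s < weightedTails a b m y := by
  have hcont : Continuous (weightedTails a b m) :=
    continuous_iff_continuousAt.2 fun z => (hasDerivAt_weightedTails a b m z).continuousAt
  have hmono := strictMonoOn_mul_pow_sub_mul_one_sub_pow ha hb (k := m - 3) (by lia)
  have hroot : a * s ^ (m - 3) - b * (1 - s) ^ (m - 3) = 0 := sub_eq_zero.2 hcrit
  have hfactor : ∀ z ∈ Ioo (0 : ℝ) 1, 0 < (m : ℝ) * (m - 1) * (z * (1 - z)) := fun z hz => by
    have hm_one : (1 : ℝ) < m := by exact_mod_cast (by lia : 1 < m)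
    exact mul_pos (mul_pos (one_pos.trans hm_one) (sub_pos.2 hm_one))
      (mul_pos hz.1 (sub_pos.2 hz.2))
  refine lt_of_deriv_neg_of_deriv_pos hs hcont.continuousOn (fun z hz => ?_) (fun z hz => ?_) hy hne
  · rw [deriv_weightedTails_eq_mul a b (by lia)]
    have hz1 : z < 1 := hz.2.trans_le hs.2
    exact mul_neg_of_pos_of_neg (hfactor z ⟨hz.1, hz1⟩)
      ((hmono ⟨hz.1.le, hz1.le⟩ hs hz.2).trans_eq hroot)
  · rw [deriv_weightedTails_eq_mul a b (by lia)]
    have hz0 : 0 < z := hs.1.trans_lt hz.1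
    exact mul_pos (hfactor z ⟨hz0, hz.2⟩)
      (hroot.symm.trans_lt (hmono hs ⟨hz0.le, hz.2.le⟩ hz.1))

theorem div_one_add_mem_Ioo {u : ℝ} (hu : 0 < u) : u / (1 + u) ∈ Ioo 0 1 :=
  ⟨by positivity, (div_lt_one (by positivity)).2 (lt_one_add u)⟩

theorem div_one_sub_eq_iff {K : Type*} [Field K] {y u : K} (hy : y ≠ 1) (hu : 1 + u ≠ 0) :
    y / (1 - y) = u ↔ y = u / (1 + u) := by
  rw [div_eq_iff (sub_ne_zero.2 hy.symm), eq_div_iff hu]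
  constructor <;> intro h <;> linear_combination h

theorem div_one_sub_pow_eq_iff {c y : ℝ} {k : ℕ} (hc : 0 ≤ c) (hk : k ≠ 0) (hy : y ∈ Ico 0 1) :
    (y / (1 - y)) ^ k = c ↔ y = c ^ (k : ℝ)⁻¹ / (1 + c ^ (k : ℝ)⁻¹) := by
  have hodds : 0 ≤ y / (1 - y) := div_nonneg hy.1 (sub_nonneg.2 hy.2.le)
  rw [← div_one_sub_eq_iff hy.2.ne (by positivity),
    Real.eq_rpow_inv hodds hc (Nat.cast_ne_zero.2 hk), Real.rpow_natCast]

theorem ks_pointwise_min_second_level'_general {a b : ℝ} (ha : 0 < a) (hb : 0 < b) {m : ℕ}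
    (hm : 4 ≤ m) :
    let h : ℝ → ℝ := fun y =>
      m * (a * y ^ (m - 1) * (1 - y) + b * y * (1 - y) ^ (m - 1)) + a * y ^ m + b * (1 - y) ^ m
    let u : ℝ := (b / a) ^ ((m : ℝ) - 3)⁻¹
    let ystar : ℝ := u / (1 + u)
    (∀ y : ℝ, HasDerivAt h
      (m * (m - 1) * (a * y ^ (m - 2) * (1 - y) - b * y * (1 - y) ^ (m - 2))) y) ∧
    ystar ∈ Ioo 0 1 ∧
    (∀ y ∈ Icc 0 1, h ystar ≤ h y) ∧
    (∀ y ∈ Icc 0 1, y ≠ ystar → h ystar < h y) ∧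
    (ystar / (1 - ystar)) ^ (m - 3) = b / a ∧
    (∀ y ∈ Ioo 0 1, (y / (1 - y)) ^ (m - 3) = b / a → y = ystar) := by
  intro h u ystar
  have h_eq : h = weightedTails a b m := by
    ext y
    simp only [h, weightedTails, binomialTail]
    ring
  have hystar : ystar ∈ Ioo 0 1 := div_one_add_mem_Ioo (by positivity)
  have hodds : ∀ y ∈ Ioo 0 1, (y / (1 - y)) ^ (m - 3) = b / a ↔ y = ystar := fun y hy => by
    have hcast : ((m - 3 : ℕ) : ℝ) = m - 3 := Nat.cast_sub (by lia)
    rw [div_one_sub_pow_eq_iff (by positivity) (by lia) ⟨hy.1.le, hy.2⟩, hcast]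
  have hroot : (ystar / (1 - ystar)) ^ (m - 3) = b / a := (hodds ystar hystar).2 rfl
  have hcrit : a * ystar ^ (m - 3) = b * (1 - ystar) ^ (m - 3) := by
    rwa [div_pow, div_eq_div_iff (pow_pos (sub_pos.2 hystar.2) _).ne' ha.ne', mul_comm] at hroot
  have hlt : ∀ y ∈ Icc 0 1, y ≠ ystar → h ystar < h y := fun y hy hne =>
    h_eq ▸ weightedTails_lt_of_critical ha hb.le hm (Ioo_subset_Icc_self hystar) hcrit hy hne
  exact ⟨h_eq ▸ hasDerivAt_weightedTails a b m, hystar,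
    fun y hy => (eq_or_ne y ystar).elim (fun heq => heq ▸ le_rfl) fun hne => (hlt y hy hne).le,
    hlt, hroot, fun y hy => (hodds y hy).1⟩

theorem rpow_sub_one_div_eq_pow_rpow_inv {t : ℝ} (ht : 0 ≤ t) {n : ℕ} (hn : 1 ≤ n) (q : ℝ) :
    t ^ (((n : ℝ) - 1) / q) = (t ^ (n - 1)) ^ q⁻¹ := by
  rw [div_eq_mul_inv, Real.rpow_mul ht, ← Nat.cast_pred hn, Real.rpow_natCast]

/-- For `n ≥ 2`, `m ≥ 4` and `x ∈ (0,1)`, the function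
`h(y) = m((1−x)^{n−1} y^{m−1}(1−y) + x^{n−1} y(1−y)^{m−1}) + (1−x)^{n−1} y^m + x^{n−1}(1−y)^m`
has derivative `h'(y) = m(m−1)((1−x)^{n−1} y^{m−2}(1−y) − x^{n−1} y (1−y)^{m−2})` and attains
its minimum on `[0,1]` at the unique point `y* = u/(1+u)`, `u = (x/(1−x))^{(n−1)/(m−3)}`,
the unique `y ∈ (0,1)` with `(y/(1−y))^{m−3} = (x/(1−x))^{n−1}`. -/
theorem ks_pointwise_min_second_level' (n m : ℕ) (hn : 2 ≤ n) (hm : 4 ≤ m)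
    (x : ℝ) (hx : x ∈ Set.Ioo (0:ℝ) 1) :
    let h : ℝ → ℝ := fun y =>
      m * ((1 - x) ^ (n - 1) * y ^ (m - 1) * (1 - y) + x ^ (n - 1) * y * (1 - y) ^ (m - 1)) +
        (1 - x) ^ (n - 1) * y ^ m + x ^ (n - 1) * (1 - y) ^ m
    let u : ℝ := (x / (1 - x)) ^ (((n : ℝ) - 1) / ((m : ℝ) - 3))
    let ystar : ℝ := u / (1 + u)
    (∀ y : ℝ, HasDerivAt h
      (m * (m - 1) *
        ((1 - x) ^ (n - 1) * y ^ (m - 2) * (1 - y) - x ^ (n - 1) * y * (1 - y) ^ (m - 2))) y) ∧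
    ystar ∈ Set.Ioo (0:ℝ) 1 ∧
    (∀ y ∈ Set.Icc (0:ℝ) 1, h ystar ≤ h y) ∧
    (∀ y ∈ Set.Icc (0:ℝ) 1, y ≠ ystar → h ystar < h y) ∧
    (ystar / (1 - ystar)) ^ (m - 3) = (x / (1 - x)) ^ (n - 1) ∧
    (∀ y ∈ Set.Ioo (0:ℝ) 1,
      (y / (1 - y)) ^ (m - 3) = (x / (1 - x)) ^ (n - 1) → y = ystar) := by
  have hodds : 0 ≤ x / (1 - x) := div_nonneg hx.1.le (sub_nonneg.2 hx.2.le)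
  simpa only [rpow_sub_one_div_eq_pow_rpow_inv hodds (by lia : 1 ≤ n), div_pow] using
    ks_pointwise_min_second_level'_general (pow_pos (sub_pos.2 hx.2) (n - 1)) (pow_pos hx.1 _) hm
end

section
/- For every measurable function G : [0,1] → [0,1], 60·∫₀¹ (x³(1−x)²(1−G(x))² + x²(1−x)³ G(x)²) dx ≥ 3/7, with equality if G(x) = x for all x ∈ [0,1]. -/
/-!
Up to the weight `(x (1 - x))²`, the integrand is the expected squared error
`x (1 - g)² + (1 - x) g²` of the forecast `g = G x` for an event of probability `x`. This loss
exceeds its value `x (1 - x)` at the truthful forecast `g = x` by exactly `(g - x)²`, so the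
integral is least at `G x = x`, and every minimizer agrees with it almost everywhere. The least
value is the beta integral `60 ∫₀¹ x³ (1 - x)³ dx = 60 · 3! 3! / 7! = 3 / 7`.
-/

open MeasureTheory

open scoped Nat in
lemma integral_pow_mul_one_sub_pow (m n : ℕ) :
    ∫ x in (0 : ℝ)..1, x ^ m * (1 - x) ^ n = (m ! * n ! : ℝ) / (m + n + 1)! := by
  have hbeta := Complex.betaIntegral_eq_Gamma_mul_div (m + 1) (n + 1)
    (by simpa using m.cast_add_one_pos) (by simpa using n.cast_add_one_pos)
  have hsum : (m + 1 + (n + 1) : ℂ) = (m + n + 1 : ℕ) + 1 := by push_cast; ring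
  rw [hsum, Complex.Gamma_nat_eq_factorial, Complex.Gamma_nat_eq_factorial,
    Complex.Gamma_nat_eq_factorial] at hbeta
  simp only [Complex.betaIntegral, add_sub_cancel_right, Complex.cpow_natCast] at hbeta
  apply Complex.ofReal_injective
  rw [← intervalIntegral.integral_ofReal]
  push_cast
  exact_mod_cast hbeta

/-- The expected Brier score `E (1_A - g)²` of the forecast `g` for an event `A` of probability
`p`, as a polynomial in arbitrary real `p` and `g`. It is a proper scoring rule: the truthful
forecast `g = p` has the least expected score. -/
def expectedBrierScore (p g : ℝ) : ℝ :=
  p * (1 - g) ^ 2 + (1 - p) * g ^ 2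

namespace expectedBrierScore

lemma eq_self_add_sq (p g : ℝ) :
    expectedBrierScore p g = expectedBrierScore p p + (g - p) ^ 2 := by
  unfold expectedBrierScore
  ring

lemma self_eq (p : ℝ) : expectedBrierScore p p = p * (1 - p) := by
  unfold expectedBrierScore
  ring

lemma mem_Icc {p g : ℝ} (hp : p ∈ Set.Icc (0 : ℝ) 1) (hg : g ∈ Set.Icc (0 : ℝ) 1) :
    expectedBrierScore p g ∈ Set.Icc (0 : ℝ) 1 := by
  have hsq : g ^ 2 ∈ Set.Icc (0 : ℝ) 1 := ⟨sq_nonneg g, pow_le_one₀ hg.1 hg.2⟩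
  have hsq' : (1 - g) ^ 2 ∈ Set.Icc (0 : ℝ) 1 :=
    ⟨sq_nonneg _, pow_le_one₀ (sub_nonneg.2 hg.2) (sub_le_self 1 hg.1)⟩
  exact convex_Icc 0 1 hsq' hsq hp.1 (sub_nonneg.2 hp.2) (add_sub_cancel p 1)

variable {Ω : Type*} [MeasurableSpace Ω] {μ : Measure Ω} {w p g : Ω → ℝ}

lemma integrable_mul (hw : Integrable w μ) (hp : AEMeasurable p μ) (hg : AEMeasurable g μ)
    (hp01 : ∀ᵐ x ∂μ, p x ∈ Set.Icc (0 : ℝ) 1) (hg01 : ∀ᵐ x ∂μ, g x ∈ Set.Icc (0 : ℝ) 1) :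
    Integrable (fun x ↦ w x * expectedBrierScore (p x) (g x)) μ := by
  have hmeas : AEMeasurable (fun x ↦ expectedBrierScore (p x) (g x)) μ := by
    unfold expectedBrierScore
    fun_prop
  refine hw.mul_bdd (c := 1) hmeas.aestronglyMeasurable ?_
  filter_upwards [hp01, hg01] with x hpx hgx
  obtain ⟨hnonneg, hle⟩ := mem_Icc hpx hgx
  rwa [Real.norm_of_nonneg hnonneg]

lemma integrable_mul_sq_sub
    (hpg : Integrable (fun x ↦ w x * expectedBrierScore (p x) (g x)) μ)
    (hpp : Integrable (fun x ↦ w x * expectedBrierScore (p x) (p x)) μ) :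
    Integrable (fun x ↦ w x * (g x - p x) ^ 2) μ := by
  refine (hpg.sub hpp).congr (.of_forall fun x ↦ ?_)
  simp only [Pi.sub_apply, eq_self_add_sq (p x) (g x)]
  ring

lemma integral_mul_eq_add_integral_mul_sq_sub
    (hpg : Integrable (fun x ↦ w x * expectedBrierScore (p x) (g x)) μ)
    (hpp : Integrable (fun x ↦ w x * expectedBrierScore (p x) (p x)) μ) :
    ∫ x, w x * expectedBrierScore (p x) (g x) ∂μ =
      ∫ x, w x * expectedBrierScore (p x) (p x) ∂μ + ∫ x, w x * (g x - p x) ^ 2 ∂μ := by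
  rw [← integral_add hpp (integrable_mul_sq_sub hpg hpp)]
  simp only [← mul_add, ← eq_self_add_sq]

lemma integral_mul_self_le (hw : ∀ᵐ x ∂μ, 0 ≤ w x)
    (hpg : Integrable (fun x ↦ w x * expectedBrierScore (p x) (g x)) μ)
    (hpp : Integrable (fun x ↦ w x * expectedBrierScore (p x) (p x)) μ) :
    ∫ x, w x * expectedBrierScore (p x) (p x) ∂μ ≤
      ∫ x, w x * expectedBrierScore (p x) (g x) ∂μ := by
  rw [integral_mul_eq_add_integral_mul_sq_sub hpg hpp]
  refine le_add_of_nonneg_right (integral_nonneg_of_ae ?_)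
  filter_upwards [hw] with x hx using mul_nonneg hx (sq_nonneg _)

lemma integral_mul_eq_integral_mul_self_iff (hw : ∀ᵐ x ∂μ, 0 < w x)
    (hpg : Integrable (fun x ↦ w x * expectedBrierScore (p x) (g x)) μ)
    (hpp : Integrable (fun x ↦ w x * expectedBrierScore (p x) (p x)) μ) :
    ∫ x, w x * expectedBrierScore (p x) (g x) ∂μ =
      ∫ x, w x * expectedBrierScore (p x) (p x) ∂μ ↔ g =ᵐ[μ] p := by
  have hnonneg : 0 ≤ᵐ[μ] fun x ↦ w x * (g x - p x) ^ 2 := by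
    filter_upwards [hw] with x hx using mul_nonneg hx.le (sq_nonneg _)
  rw [integral_mul_eq_add_integral_mul_sq_sub hpg hpp, add_eq_left,
    integral_eq_zero_iff_of_nonneg_ae hnonneg (integrable_mul_sq_sub hpg hpp)]
  refine Filter.eventually_congr ?_
  filter_upwards [hw] with x hx
  simp [hx.ne', sub_eq_zero]

end expectedBrierScore

/-- The integrand, up to the factor `60`, of the power of the test at an alternative with cdf value
`g` at `x`. The test rejects when both observations of the second sample lie above the fourth, or
both below the third, of the six ordered uniform observations, whose densities are
`60 x³ (1 - x)²` and `60 x² (1 - x)³`. -/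
def ksIntegrand (x g : ℝ) : ℝ :=
  x ^ 3 * (1 - x) ^ 2 * (1 - g) ^ 2 + x ^ 2 * (1 - x) ^ 3 * g ^ 2

lemma ksIntegrand_eq_mul_expectedBrierScore (x g : ℝ) :
    ksIntegrand x g = (x * (1 - x)) ^ 2 * expectedBrierScore x g := by
  unfold ksIntegrand expectedBrierScore
  ring

lemma intervalIntegrable_ksIntegrand {G : ℝ → ℝ}
    (hGmeas : AEMeasurable G (volume.restrict (Set.Icc 0 1)))
    (hG : ∀ᵐ x ∂volume.restrict (Set.Icc (0 : ℝ) 1), G x ∈ Set.Icc (0 : ℝ) 1) :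
    IntervalIntegrable (fun x ↦ ksIntegrand x (G x)) volume 0 1 := by
  simp only [ksIntegrand_eq_mul_expectedBrierScore]
  rw [intervalIntegrable_iff_integrableOn_Icc_of_le zero_le_one]
  have hw : IntegrableOn (fun x : ℝ ↦ (x * (1 - x)) ^ 2) (Set.Icc 0 1) :=
    Continuous.integrableOn_Icc (by fun_prop)
  exact expectedBrierScore.integrable_mul hw aemeasurable_id hGmeas
    (ae_restrict_mem measurableSet_Icc) hG

lemma ksIntegrand_self (x : ℝ) : ksIntegrand x x = x ^ 3 * (1 - x) ^ 3 := by
  rw [ksIntegrand_eq_mul_expectedBrierScore, expectedBrierScore.self_eq]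
  ring

lemma integral_ksIntegrand_self : ∫ x in (0 : ℝ)..1, ksIntegrand x x = 1 / 140 := by
  simp only [ksIntegrand_self, integral_pow_mul_one_sub_pow]
  norm_num [Nat.factorial]

lemma ae_restrict_Icc_sq_mul_one_sub_pos :
    ∀ᵐ x ∂volume.restrict (Set.Icc (0 : ℝ) 1), 0 < (x * (1 - x)) ^ 2 := by
  rw [← restrict_Ioo_eq_restrict_Icc]
  filter_upwards [ae_restrict_mem measurableSet_Ioo] with x ⟨hx0, hx1⟩
  exact pow_pos (mul_pos hx0 (sub_pos.2 hx1)) 2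

theorem ks_unbiased_six_two_general {G : ℝ → ℝ}
    (hG : IntervalIntegrable (fun x ↦ ksIntegrand x (G x)) volume 0 1) :
    60 * ∫ x in (0 : ℝ)..1, ksIntegrand x (G x) ≥ 3 / 7 ∧
    (60 * ∫ x in (0 : ℝ)..1, ksIntegrand x (G x) = 3 / 7 ↔
      ∀ᵐ x ∂volume.restrict (Set.Icc 0 1), G x = x) := by
  have hself := intervalIntegrable_ksIntegrand aemeasurable_id' (ae_restrict_mem measurableSet_Icc)
  have hmin := integral_ksIntegrand_self
  rw [intervalIntegrable_iff_integrableOn_Icc_of_le zero_le_one] at hG hself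
  simp only [ksIntegrand_eq_mul_expectedBrierScore, intervalIntegral.integral_of_le zero_le_one,
    ← integral_Icc_eq_integral_Ioc] at hG hself hmin ⊢
  have hpos := ae_restrict_Icc_sq_mul_one_sub_pos
  have hle := expectedBrierScore.integral_mul_self_le (hpos.mono fun _ ↦ le_of_lt) hG hself
  have heq_iff := expectedBrierScore.integral_mul_eq_integral_mul_self_iff hpos hG hself
  rw [hmin] at hle heq_iff
  refine ⟨by linarith, Iff.trans ?_ heq_iff⟩
  constructor <;> intro h <;> linarith

/-- For `n = 6`, `m = 2`, the two-sample Kolmogorov–Smirnov test is unbiased at level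
`α₃ = 3/7`: for every measurable `G : [0,1] → [0,1]`,
`60·∫₀¹ (x³(1−x)²(1−G(x))² + x²(1−x)³ G(x)²) dx ≥ 3/7`, with equality if `G(x) = x` on `[0,1]`. -/
theorem ks_unbiased_six_two (G : ℝ → ℝ) (hGmeas : Measurable G)
    (hG : ∀ x ∈ Set.Icc (0:ℝ) 1, G x ∈ Set.Icc (0:ℝ) 1) :
    60 * ∫ x in (0:ℝ)..1,
        (x ^ 3 * (1 - x) ^ 2 * (1 - G x) ^ 2 + x ^ 2 * (1 - x) ^ 3 * (G x) ^ 2) ≥ 3 / 7 ∧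
    ((∀ x ∈ Set.Icc (0:ℝ) 1, G x = x) →
      60 * ∫ x in (0:ℝ)..1,
        (x ^ 3 * (1 - x) ^ 2 * (1 - G x) ^ 2 + x ^ 2 * (1 - x) ^ 3 * (G x) ^ 2) = 3 / 7) := by
  have ⟨hge, heq_iff⟩ := ks_unbiased_six_two_general <| intervalIntegrable_ksIntegrand
    hGmeas.aemeasurable (ae_restrict_of_forall_mem measurableSet_Icc hG)
  exact ⟨hge, fun hid ↦ heq_iff.2 (ae_restrict_of_forall_mem measurableSet_Icc hid)⟩
end
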